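/- Let n be an even positive integer. Then the group V_{8n} has exactly 2n+6 conjugacy classes. -/

import Mathlib

/-- The relators of the presentation
`V_{8n} = ⟨a, b ∣ a^{2n} = b⁴ = 1, (ba)² = 1, (b⁻¹a)² = 1⟩`,
where `a` is the generator indexed by `0` and `b` the one indexed by `1`.
(The relations `ba = a⁻¹b⁻¹` and `b⁻¹a = a⁻¹b` are equivalent to
`(ba)² = 1` and `(b⁻¹a)² = 1` respectively.) -/
def V8nRels (n : ℕ) : Set (FreeGroup (Fin 2)) :=
  {(FreeGroup.of 0) ^ (2 * n), (FreeGroup.of 1) ^ 4,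
   (FreeGroup.of 1 * FreeGroup.of 0) ^ 2,
   ((FreeGroup.of 1)⁻¹ * FreeGroup.of 0) ^ 2}

/-- The group `V_{8n}` of order `8n`. -/
abbrev V8n (n : ℕ) : Type := PresentedGroup (V8nRels n)

/-- The generator `a` of `V_{8n}`. -/
def aV (n : ℕ) : V8n n := PresentedGroup.of 0

/-- The generator `b` of `V_{8n}`. -/
def bV (n : ℕ) : V8n n := PresentedGroup.of 1

/-!
Let `A` be a commutative subgroup of index two in a finite group `G`, let `b ∉ A`, and let `Z` be
the group of elements of `A` commuting with `b`. Every element outside `A` has the form `x b` with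
`x ∈ A`, so it commutes with the same elements of `A` as `b`. Hence the centralizer of an element
has order `2|Z|` outside `A`, `2|A|` on `Z`, and `|A|` on the rest of `A`. Summing these orders
counts the commuting pairs, of which there are `2|A|` times the number `k` of conjugacy classes,
and gives `2k = |A| + 3|Z|`.

In `V_{8n}` take `A = ⟨a, b²⟩ ≅ C_{2n} × C_2`. Since `b aⁱ b⁻¹ = a⁻ⁱ b²ⁱ`, the power `aⁱ` commutes
with `b` iff `a²ⁱ = b²ⁱ`, that is, iff `2n ∣ 2i` and `4 ∣ 2i`. For even `n` this means `n ∣ i`, so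
`Z = ⟨aⁿ, b²⟩` has order `4` and `2k = 4n + 12`.
-/

section CommutingSubgroups

variable {G : Type*} [Group G] {H K : Subgroup G}

lemma range_noncommCoprod_subtype (hcomm : ∀ (h : H) (k : K), Commute (H.subtype h) (K.subtype k)) :
    (MonoidHom.noncommCoprod H.subtype K.subtype hcomm).range = H ⊔ K := by
  rw [MonoidHom.noncommCoprod_range, H.range_subtype, K.range_subtype]

lemma card_sup_of_commute_of_disjoint
    (hcomm : ∀ (h : H) (k : K), Commute (H.subtype h) (K.subtype k)) (hdisj : Disjoint H K) :
    Nat.card ↥(H ⊔ K) = Nat.card H * Nat.card K := by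
  have hinj : Function.Injective (MonoidHom.noncommCoprod H.subtype K.subtype hcomm) :=
    (MonoidHom.noncommCoprod_injective ..).2
      ⟨H.subtype_injective, K.subtype_injective, by simpa using hdisj⟩
  rw [← range_noncommCoprod_subtype hcomm, ← Nat.card_prod]
  exact (Nat.card_congr (MonoidHom.ofInjective hinj).toEquiv).symm

variable {x y : G}

lemma commute_coe_zpowers (hxy : Commute x y) (h : Subgroup.zpowers x) (k : Subgroup.zpowers y) :
    Commute ((Subgroup.zpowers x).subtype h) ((Subgroup.zpowers y).subtype k) := by
  obtain ⟨_, i, rfl⟩ := h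
  obtain ⟨_, j, rfl⟩ := k
  exact hxy.zpow_zpow i j

lemma mem_zpowers_sup_zpowers_iff (hxy : Commute x y) {g : G} :
    g ∈ Subgroup.zpowers x ⊔ Subgroup.zpowers y ↔ ∃ i j : ℤ, x ^ i * y ^ j = g := by
  simp [← range_noncommCoprod_subtype (commute_coe_zpowers hxy), MonoidHom.mem_range]

lemma isMulCommutative_zpowers_sup_zpowers (hxy : Commute x y) :
    IsMulCommutative ↥(Subgroup.zpowers x ⊔ Subgroup.zpowers y) := by
  rw [← range_noncommCoprod_subtype (commute_coe_zpowers hxy)]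
  infer_instance

lemma card_zpowers_sup_zpowers (hxy : Commute x y)
    (hdisj : Disjoint (Subgroup.zpowers x) (Subgroup.zpowers y)) :
    Nat.card ↥(Subgroup.zpowers x ⊔ Subgroup.zpowers y) = orderOf x * orderOf y := by
  rw [card_sup_of_commute_of_disjoint (commute_coe_zpowers hxy) hdisj, Nat.card_zpowers,
    Nat.card_zpowers]

end CommutingSubgroups

section CommutativeIndexTwo

variable {G : Type*} [Group G]

lemma sum_card_centralizer [Fintype G] :
    ∑ g : G, Nat.card (Subgroup.centralizer {g}) = Nat.card (ConjClasses G) * Nat.card G := by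
  rw [← card_comm_eq_card_conjClasses_mul_card,
    Nat.card_congr (Equiv.subtypeProdEquivSigmaSubtype Commute), Nat.card_sigma]
  refine Finset.sum_congr rfl fun g _ ↦ Nat.card_congr (Equiv.subtypeEquivRight fun h ↦ ?_)
  rw [Subgroup.mem_centralizer_singleton_iff, eq_comm, commute_iff_eq]

lemma mem_centralizer_singleton_comm {g h : G} :
    g ∈ Subgroup.centralizer {h} ↔ h ∈ Subgroup.centralizer {g} := by
  simp only [Subgroup.mem_centralizer_singleton_iff, eq_comm]

variable {A : Subgroup G}

lemma card_eq_two_mul_card_inf (hA : A.index = 2) {K : Subgroup G} (hK : ¬K ≤ A) :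
    Nat.card K = 2 * Nat.card ↥(A ⊓ K) := by
  obtain ⟨k, hk, hkA⟩ := SetLike.not_le_iff_exists.1 hK
  have hrel : A.relIndex K = 2 := Subgroup.relIndex_eq_two_iff.2
    ⟨k, hk, fun g _ ↦ by by_cases g ∈ A <;> simp_all [Subgroup.mul_mem_iff_of_index_two hA, Xor]⟩
  simpa [hrel, mul_comm] using (Subgroup.relIndex_inf_mul_relIndex ⊥ A K).symm

lemma card_notMem_of_index_two (hA : A.index = 2) : Nat.card {g // g ∉ A} = Nat.card A := by
  obtain ⟨b, hb⟩ : ∃ b, b ∉ A := by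
    by_contra! h
    simp [(Subgroup.eq_top_iff' A).2 h] at hA
  refine (Nat.card_congr ((Equiv.mulRight b).subtypeEquiv fun a ↦ ?_)).symm
  simp [Subgroup.mul_mem_iff_of_index_two hA, hb]

variable [IsMulCommutative A] {a b : G}

lemma le_centralizer_singleton_of_mem (ha : a ∈ A) : A ≤ Subgroup.centralizer {a} :=
  fun _ hx ↦ Subgroup.mem_centralizer_singleton_iff.2 (setLike_mul_comm hx ha)

lemma mem_centralizer_singleton_iff_of_notMem (hA : A.index = 2) (hb : b ∉ A) {g : G}
    (hg : g ∉ A) (ha : a ∈ A) :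
    a ∈ Subgroup.centralizer {g} ↔ a ∈ Subgroup.centralizer {b} := by
  have hgb : g * b⁻¹ ∈ Subgroup.centralizer {a} := le_centralizer_singleton_of_mem ha <| by
    simp [Subgroup.mul_mem_iff_of_index_two hA, hg, hb]
  rw [mem_centralizer_singleton_comm, mem_centralizer_singleton_comm (g := a),
    ← Subgroup.mul_mem_cancel_left _ hgb (y := b), inv_mul_cancel_right]

lemma card_centralizer_of_notMem (hA : A.index = 2) (hb : b ∉ A) {g : G} (hg : g ∉ A) :
    Nat.card (Subgroup.centralizer {g}) = 2 * Nat.card ↥(A ⊓ Subgroup.centralizer {b}) := by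
  have hinf : A ⊓ Subgroup.centralizer {g} = A ⊓ Subgroup.centralizer {b} := by
    ext a
    simpa using mem_centralizer_singleton_iff_of_notMem hA hb hg
  rw [← hinf]
  exact card_eq_two_mul_card_inf hA fun h ↦
    hg (h (Subgroup.mem_centralizer_singleton_iff.2 rfl))

lemma centralizer_singleton_eq_top_of_mem (hA : A.index = 2) (hb : b ∉ A) (ha : a ∈ A)
    (hab : a ∈ Subgroup.centralizer {b}) : Subgroup.centralizer {a} = ⊤ := by
  refine (Subgroup.eq_top_iff' _).2 fun g ↦ ?_
  by_cases hg : g ∈ A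
  · exact le_centralizer_singleton_of_mem ha hg
  · rwa [mem_centralizer_singleton_comm, mem_centralizer_singleton_iff_of_notMem hA hb hg ha]

lemma centralizer_singleton_eq_of_mem_of_notMem (hA : A.index = 2) (hb : b ∉ A) (ha : a ∈ A)
    (hab : a ∉ Subgroup.centralizer {b}) : Subgroup.centralizer {a} = A := by
  refine le_antisymm (fun g hga ↦ ?_) (le_centralizer_singleton_of_mem ha)
  by_contra hg
  exact hab <| (mem_centralizer_singleton_iff_of_notMem hA hb hg ha).1
    (mem_centralizer_singleton_comm.1 hga)

lemma card_centralizer_of_mem [Decidable (a ∈ Subgroup.centralizer {b})] (hA : A.index = 2)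
    (hb : b ∉ A) (ha : a ∈ A) :
    Nat.card (Subgroup.centralizer {a}) =
      Nat.card A + if a ∈ Subgroup.centralizer {b} then Nat.card A else 0 := by
  split_ifs with hab
  · rw [centralizer_singleton_eq_top_of_mem hA hb ha hab, Subgroup.card_top, ← A.card_mul_index, hA,
      mul_two]
  · rw [centralizer_singleton_eq_of_mem_of_notMem hA hb ha hab, add_zero]

lemma sum_card_centralizer_of_mem [Fintype G] [DecidablePred (· ∈ A)] (hA : A.index = 2)
    (hb : b ∉ A) :
    ∑ a : {g // g ∈ A}, Nat.card (Subgroup.centralizer {(a : G)}) =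
      Nat.card A * (Nat.card A + Nat.card ↥(A ⊓ Subgroup.centralizer {b})) := by
  classical
  have hcard : Finset.card {a : {g // g ∈ A} | (a : G) ∈ Subgroup.centralizer {b}} =
      Nat.card ↥(A ⊓ Subgroup.centralizer {b}) := by
    rw [← Fintype.card_subtype, ← Nat.card_eq_fintype_card]
    exact Nat.card_congr
      (Equiv.subtypeSubtypeEquivSubtypeInter (· ∈ A) (· ∈ Subgroup.centralizer {b}))
  calc
    _ = ∑ a : {g // g ∈ A},
        (Nat.card A + if (a : G) ∈ Subgroup.centralizer {b} then Nat.card A else 0) :=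
      Finset.sum_congr rfl fun a _ ↦ card_centralizer_of_mem hA hb a.2
    _ = _ := by
      rw [Finset.sum_add_distrib, ← Finset.sum_filter, Finset.sum_const, Finset.sum_const, hcard,
        Finset.card_univ, ← Nat.card_eq_fintype_card, smul_eq_mul, smul_eq_mul]
      ring

lemma sum_card_centralizer_of_notMem [Fintype G] [DecidablePred (· ∈ A)] (hA : A.index = 2)
    (hb : b ∉ A) :
    ∑ g : {g // g ∉ A}, Nat.card (Subgroup.centralizer {(g : G)}) =
      Nat.card A * (2 * Nat.card ↥(A ⊓ Subgroup.centralizer {b})) := by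
  rw [Finset.sum_congr rfl fun g _ ↦ card_centralizer_of_notMem hA hb g.2, Finset.sum_const,
    Finset.card_univ, ← Nat.card_eq_fintype_card, card_notMem_of_index_two hA, smul_eq_mul]

theorem two_mul_card_conjClasses_of_index_two [Finite G] (hA : A.index = 2) (hb : b ∉ A) :
    2 * Nat.card (ConjClasses G) =
      Nat.card A + 3 * Nat.card ↥(A ⊓ Subgroup.centralizer {b}) := by
  classical
  have := Fintype.ofFinite G
  have hsum := Fintype.sum_subtype_add_sum_subtype (· ∈ A)
    fun g : G ↦ Nat.card (Subgroup.centralizer {g})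
  rw [sum_card_centralizer_of_mem hA hb, sum_card_centralizer_of_notMem hA hb,
    sum_card_centralizer, ← A.card_mul_index, hA] at hsum
  refine Nat.eq_of_mul_eq_mul_left (Nat.card_pos (α := A)) ?_
  linear_combination -hsum

end CommutativeIndexTwo

section Dihedral

open DihedralGroup

lemma r_one_zpow_mul_sr_zero_zpow_eq_one_iff {n : ℕ} (i j : ℤ) :
    (r 1 : DihedralGroup n) ^ i * sr 0 ^ j = 1 ↔ (n : ℤ) ∣ i ∧ 2 ∣ j := by
  have hsq : (sr 0 : DihedralGroup n) ^ (2 : ℤ) = 1 := by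
    rw [← orderOf_dvd_iff_zpow_eq_one, orderOf_sr, Nat.cast_ofNat]
  obtain ⟨k, rfl | rfl⟩ := j.even_or_odd'
  · simp [zpow_mul, hsq, one_def, -r_zero, ZMod.intCast_zmod_eq_zero_iff_dvd]
  · simp [zpow_add, zpow_mul, hsq, one_def, -r_zero]

end Dihedral

section Relations

variable {G : Type*} [Group G] {a b : G}

lemma mul_eq_inv_mul_inv_of_sq_eq_one (h : (b * a) ^ 2 = 1) : b * a = a⁻¹ * b⁻¹ := by
  rw [← mul_inv_rev]
  exact eq_inv_of_mul_eq_one_left (by rwa [← sq])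

lemma sq_inv_eq_sq_of_pow_four_eq_one (hb : b ^ 4 = 1) : (b ^ 2)⁻¹ = b ^ 2 :=
  inv_eq_of_mul_eq_one_left (by rwa [← pow_add])

variable (hb : b ^ 4 = 1) (hba : (b * a) ^ 2 = 1) (hba' : (b⁻¹ * a) ^ 2 = 1)
include hb hba hba'

lemma commute_sq_of_relations : Commute a (b ^ 2) := by
  have h₁ : b * a = a⁻¹ * b⁻¹ := mul_eq_inv_mul_inv_of_sq_eq_one hba
  have h₂ : b⁻¹ * a = a⁻¹ * b := by simpa using mul_eq_inv_mul_inv_of_sq_eq_one hba'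
  calc
    a * b ^ 2 = a * (b ^ 2)⁻¹ := by rw [sq_inv_eq_sq_of_pow_four_eq_one hb]
    _ = a * (b⁻¹ * a) * (a⁻¹ * b⁻¹) := by group
    _ = a * (a⁻¹ * b) * (b * a) := by rw [h₁, h₂]
    _ = b ^ 2 * a := by rw [mul_inv_cancel_left, ← mul_assoc, sq]

lemma semiconjBy_zpow_of_relations (i : ℤ) :
    SemiconjBy b (a ^ i) (a ^ (-i) * b ^ (2 * i)) := by
  have hsemi : SemiconjBy b a (a⁻¹ * b ^ 2) := by
    rw [SemiconjBy, mul_eq_inv_mul_inv_of_sq_eq_one hba, ← sq_inv_eq_sq_of_pow_four_eq_one hb]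
    group
  have hcomm : Commute a⁻¹ (b ^ 2) := (commute_sq_of_relations hb hba hba').inv_left
  simpa [hcomm.mul_zpow, zpow_mul] using hsemi.zpow_right i

lemma commute_zpow_iff_of_relations (i : ℤ) : Commute (a ^ i) b ↔ a ^ (2 * i) = b ^ (2 * i) := by
  rw [commute_iff_eq, eq_comm, (semiconjBy_zpow_of_relations hb hba hba' i).eq, mul_left_inj,
    zpow_neg, inv_mul_eq_iff_eq_mul, ← zpow_add, ← two_mul, eq_comm]

lemma mul_zpow_mul_zpow_of_relations (i j : ℤ) :
    b * (a ^ i * b ^ j) = a ^ (-i) * b ^ (2 * i + 1 + j) := by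
  rw [← mul_assoc, (semiconjBy_zpow_of_relations hb hba hba' i).eq]
  group

lemma exists_zpow_mul_zpow_eq_of_mem_closure {g : G} (hg : g ∈ Subgroup.closure {a, b}) :
    ∃ i j : ℤ, a ^ i * b ^ j = g := by
  induction hg using Subgroup.closure_induction_left with
  | one => exact ⟨0, 0, by simp⟩
  | mul_left x hx _ _ ih =>
    obtain ⟨i, j, rfl⟩ := ih
    obtain rfl | rfl := hx
    · exact ⟨1 + i, j, by group⟩
    · exact ⟨_, _, (mul_zpow_mul_zpow_of_relations hb hba hba' i j).symm⟩
  | inv_mul_cancel x hx _ _ ih =>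
    obtain ⟨i, j, rfl⟩ := ih
    obtain rfl | rfl := hx
    · exact ⟨-1 + i, j, by group⟩
    · -- The relations are symmetric under `b ↦ b⁻¹`.
      have h := mul_zpow_mul_zpow_of_relations (b := x⁻¹) (by rw [inv_pow, hb, inv_one]) hba'
        (by rwa [inv_inv]) i (-j)
      simp only [inv_zpow', neg_neg] at h
      exact ⟨_, _, h.symm⟩

end Relations

namespace V8n

variable (n : ℕ)

lemma aV_pow : aV n ^ (2 * n) = 1 :=
  PresentedGroup.one_of_mem (x := FreeGroup.of 0 ^ (2 * n)) (by simp [V8nRels])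

lemma bV_pow_four : bV n ^ 4 = 1 :=
  PresentedGroup.one_of_mem (x := FreeGroup.of 1 ^ 4) (by simp [V8nRels])

lemma bV_mul_aV_sq : (bV n * aV n) ^ 2 = 1 :=
  PresentedGroup.one_of_mem (x := (FreeGroup.of 1 * FreeGroup.of 0) ^ 2) (by simp [V8nRels])

lemma bV_inv_mul_aV_sq : ((bV n)⁻¹ * aV n) ^ 2 = 1 :=
  PresentedGroup.one_of_mem (x := ((FreeGroup.of 1)⁻¹ * FreeGroup.of 0) ^ 2) (by simp [V8nRels])

lemma exists_zpow_mul_zpow_eq (g : V8n n) : ∃ i j : ℤ, aV n ^ i * bV n ^ j = g := by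
  refine exists_zpow_mul_zpow_eq_of_mem_closure (bV_pow_four n) (bV_mul_aV_sq n)
    (bV_inv_mul_aV_sq n) ?_
  have hrange : Set.range (PresentedGroup.of (rels := V8nRels n)) = {aV n, bV n} := by
    ext
    simp [Fin.exists_fin_two, aV, bV, eq_comm]
  rw [← hrange, PresentedGroup.closure_range_of]
  exact Subgroup.mem_top g

open DihedralGroup in
/-- The homomorphism from `V_{8n}` to the product of the dihedral groups of orders `4n` and `8`
that makes `a` a rotation and `b` a reflection in the first factor, and conversely in the second.
It is used to tell the words `a ^ i * b ^ j` apart. -/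
def toDihedralProd : V8n n →* DihedralGroup (2 * n) × DihedralGroup 4 :=
  PresentedGroup.toGroup (f := ![(r 1, sr 0), (sr 0, r 1)]) <| by
    have hr_four : (r 1 : DihedralGroup 4) ^ 4 = 1 := r_one_pow_n
    rintro _ (rfl | rfl | rfl | rfl)
    · simp [Prod.ext_iff, pow_mul (sr 0), sq]
    · simp [Prod.ext_iff, hr_four, pow_succ (sr 0)]
    · simp [Prod.ext_iff, sq]
    · simp [Prod.ext_iff, sq]

open DihedralGroup in
lemma toDihedralProd_zpow_mul_zpow (i j : ℤ) :
    toDihedralProd n (aV n ^ i * bV n ^ j) = (r 1 ^ i * sr 0 ^ j, sr 0 ^ i * r 1 ^ j) := by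
  rw [map_mul, map_zpow, map_zpow, toDihedralProd, aV, bV, PresentedGroup.toGroup.of,
    PresentedGroup.toGroup.of]
  rfl

lemma aV_zpow_mul_bV_zpow_eq_one_iff (i j : ℤ) :
    aV n ^ i * bV n ^ j = 1 ↔ ((2 * n : ℕ) : ℤ) ∣ i ∧ 4 ∣ j := by
  refine ⟨fun h ↦ ?_, ?_⟩
  · have himage := congrArg (toDihedralProd n) h
    rw [toDihedralProd_zpow_mul_zpow, map_one, Prod.mk_eq_one] at himage
    have hsnd := congrArg (·⁻¹) himage.2
    simp only [mul_inv_rev, ← zpow_neg, inv_one] at hsnd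
    exact ⟨((r_one_zpow_mul_sr_zero_zpow_eq_one_iff i j).1 himage.1).1,
      (Int.dvd_neg.1 ((r_one_zpow_mul_sr_zero_zpow_eq_one_iff (-j) (-i)).1 hsnd).1)⟩
  · rintro ⟨⟨k, rfl⟩, l, rfl⟩
    rw [zpow_mul, zpow_natCast, aV_pow, one_zpow, one_mul, zpow_mul, zpow_ofNat, bV_pow_four,
      one_zpow]

lemma orderOf_aV : orderOf (aV n) = 2 * n := by
  refine Nat.dvd_antisymm (orderOf_dvd_of_pow_eq_one (aV_pow n)) ?_
  have h := aV_zpow_mul_bV_zpow_eq_one_iff n (orderOf (aV n)) 0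
  rw [zpow_natCast, pow_orderOf_eq_one, zpow_zero, mul_one, Int.natCast_dvd_natCast] at h
  exact (h.1 rfl).1

lemma orderOf_bV : orderOf (bV n) = 4 := by
  refine Nat.dvd_antisymm (orderOf_dvd_of_pow_eq_one (bV_pow_four n)) ?_
  have h := aV_zpow_mul_bV_zpow_eq_one_iff n 0 (orderOf (bV n))
  simpa [pow_orderOf_eq_one, ← Int.natCast_dvd_natCast] using h

lemma orderOf_bV_sq : orderOf (bV n ^ 2) = 2 := by
  rw [orderOf_pow_of_dvd two_ne_zero (by norm_num [orderOf_bV]), orderOf_bV]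

lemma disjoint_zpowers_aV_zpowers_bV :
    Disjoint (Subgroup.zpowers (aV n)) (Subgroup.zpowers (bV n)) := by
  rw [Subgroup.disjoint_iff_mul_eq_one]
  rintro _ _ ⟨i, rfl⟩ ⟨j, rfl⟩ h
  obtain ⟨hi, hj⟩ := (aV_zpow_mul_bV_zpow_eq_one_iff n i j).1 h
  exact ⟨orderOf_dvd_iff_zpow_eq_one.1 (by rwa [orderOf_aV]),
    orderOf_dvd_iff_zpow_eq_one.1 (by rwa [orderOf_bV])⟩

lemma commute_aV_bV_sq : Commute (aV n) (bV n ^ 2) :=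
  commute_sq_of_relations (bV_pow_four n) (bV_mul_aV_sq n) (bV_inv_mul_aV_sq n)

/-- The subgroup `⟨a, b²⟩` of `V_{8n}`, which is commutative of index two. -/
def abelianSubgroup : Subgroup (V8n n) :=
  Subgroup.zpowers (aV n) ⊔ Subgroup.zpowers (bV n ^ 2)

instance : IsMulCommutative (abelianSubgroup n) :=
  isMulCommutative_zpowers_sup_zpowers (commute_aV_bV_sq n)

lemma card_abelianSubgroup : Nat.card (abelianSubgroup n) = 4 * n := by
  have hdisj := (disjoint_zpowers_aV_zpowers_bV n).mono_right
    (Subgroup.zpowers_le.2 (Subgroup.npow_mem_zpowers (bV n) 2))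
  rw [abelianSubgroup, card_zpowers_sup_zpowers (commute_aV_bV_sq n) hdisj, orderOf_aV,
    orderOf_bV_sq]
  ring

lemma mem_abelianSubgroup_iff {g : V8n n} :
    g ∈ abelianSubgroup n ↔ ∃ i j : ℤ, aV n ^ i * (bV n ^ 2) ^ j = g :=
  mem_zpowers_sup_zpowers_iff (commute_aV_bV_sq n)

lemma aV_zpow_mul_bV_zpow_mem_abelianSubgroup_iff (i j : ℤ) :
    aV n ^ i * bV n ^ j ∈ abelianSubgroup n ↔ Even j := by
  rw [mem_abelianSubgroup_iff]
  constructor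
  · rintro ⟨k, l, h⟩
    have hone : aV n ^ (-i + k) * bV n ^ (2 * l - j) = 1 := by
      rw [zpow_add, zpow_sub, zpow_mul, zpow_ofNat, mul_assoc, ← mul_assoc (aV n ^ k), h]
      group
    have hdvd := ((aV_zpow_mul_bV_zpow_eq_one_iff n _ _).1 hone).2
    grind
  · rintro ⟨k, rfl⟩
    exact ⟨i, k, by rw [← two_mul, zpow_mul, zpow_ofNat]⟩

lemma bV_notMem_abelianSubgroup : bV n ∉ abelianSubgroup n := by
  simpa using aV_zpow_mul_bV_zpow_mem_abelianSubgroup_iff n 0 1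

lemma index_abelianSubgroup : (abelianSubgroup n).index = 2 := by
  refine Subgroup.index_eq_two_iff.2 ⟨bV n, fun g ↦ ?_⟩
  obtain ⟨i, j, rfl⟩ := exists_zpow_mul_zpow_eq n g
  rw [mul_assoc, ← zpow_add_one, aV_zpow_mul_bV_zpow_mem_abelianSubgroup_iff,
    aV_zpow_mul_bV_zpow_mem_abelianSubgroup_iff, Int.even_add_one, Xor]
  tauto

lemma card : Nat.card (V8n n) = 8 * n := by
  rw [← (abelianSubgroup n).card_mul_index, card_abelianSubgroup, index_abelianSubgroup]
  ring

variable {n}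

lemma finite (hn : 0 < n) : Finite (V8n n) :=
  Nat.finite_of_card_ne_zero (by rw [V8n.card]; omega)

lemma commute_aV_zpow_bV_iff (hev : Even n) (i : ℤ) : Commute (aV n ^ i) (bV n) ↔ (n : ℤ) ∣ i := by
  rw [commute_zpow_iff_of_relations (bV_pow_four n) (bV_mul_aV_sq n) (bV_inv_mul_aV_sq n),
    ← mul_inv_eq_one, ← zpow_neg, aV_zpow_mul_bV_zpow_eq_one_iff, Nat.cast_mul]
  push_cast
  rw [mul_dvd_mul_iff_left two_ne_zero, and_iff_left_of_imp]
  intro hni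
  have htwo : (2 : ℤ) ∣ i := (Int.natCast_dvd_natCast.2 hev.two_dvd).trans hni
  exact (Int.dvd_neg).2 (mul_dvd_mul_left 2 htwo)

lemma abelianSubgroup_inf_centralizer_bV (hev : Even n) :
    abelianSubgroup n ⊓ Subgroup.centralizer {bV n} =
      Subgroup.zpowers (aV n ^ n) ⊔ Subgroup.zpowers (bV n ^ 2) := by
  ext g
  rw [Subgroup.mem_inf, mem_abelianSubgroup_iff, Subgroup.mem_centralizer_singleton_iff,
    mem_zpowers_sup_zpowers_iff ((commute_aV_bV_sq n).pow_left n)]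
  have hcomm (j : ℤ) : Commute ((bV n ^ 2) ^ j) (bV n) :=
    ((Commute.refl (bV n)).pow_left 2).zpow_left j
  constructor
  · rintro ⟨⟨i, j, rfl⟩, h⟩
    have hi : Commute (aV n ^ i) (bV n) := by
      simpa using Commute.mul_left h (hcomm j).inv_left
    obtain ⟨k, rfl⟩ := (commute_aV_zpow_bV_iff hev i).1 hi
    exact ⟨k, j, by rw [zpow_mul, zpow_natCast]⟩
  · rintro ⟨k, j, rfl⟩
    rw [← zpow_natCast (aV n), ← zpow_mul]
    exact ⟨⟨n * k, j, rfl⟩,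
      ((commute_aV_zpow_bV_iff hev _).2 (dvd_mul_right _ k)).mul_left (hcomm j)⟩

lemma card_abelianSubgroup_inf_centralizer_bV (hn : 0 < n) (hev : Even n) :
    Nat.card ↥(abelianSubgroup n ⊓ Subgroup.centralizer {bV n}) = 4 := by
  have horder : orderOf (aV n ^ n) = 2 := by
    rw [orderOf_pow_of_dvd hn.ne' (by simp [orderOf_aV]), orderOf_aV, Nat.mul_div_cancel _ hn]
  have hdisj := (disjoint_zpowers_aV_zpowers_bV n).mono
    (Subgroup.zpowers_le.2 (Subgroup.npow_mem_zpowers (aV n) n))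
    (Subgroup.zpowers_le.2 (Subgroup.npow_mem_zpowers (bV n) 2))
  rw [abelianSubgroup_inf_centralizer_bV hev,
    card_zpowers_sup_zpowers ((commute_aV_bV_sq n).pow_left n) hdisj, horder, orderOf_bV_sq]

end V8n

/-- If `n` is an even positive integer, then `V_{8n}` has exactly
`2n + 6` conjugacy classes. -/
theorem card_conjClasses_V8n_even (n : ℕ) (hn : 0 < n) (hev : Even n) :
    Nat.card (ConjClasses (V8n n)) = 2 * n + 6 := by
  have := V8n.finite hn
  have hcount := two_mul_card_conjClasses_of_index_two (V8n.index_abelianSubgroup n)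
    (V8n.bV_notMem_abelianSubgroup n)
  rw [V8n.card_abelianSubgroup, V8n.card_abelianSubgroup_inf_centralizer_bV hn hev] at hcount
  omega
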